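/- Let c_0 be the unique solution of log(x)/x = −1/2 on the positive reals (c_0 ≈ 0.7). For every r ≥ 1, every n ≥ 1 and every x > 0, P_P( θ_r(P;X_n) − E_P[θ_r(P;X_n)] ≥ √(2 v_n(P) x) + [2·max(c_0/2, x + log n)/n]^r · (2x/3) ) ≤ 2 e^{−x}. -/

import Mathlib

open MeasureTheory ProbabilityTheory Real Filter

noncomputable section

/-- The law of an i.i.d. sample of size `n` from the discrete distribution `P` on `ℕ`. -/
def sampleMeasure (P : PMF ℕ) (n : ℕ) : Measure (Fin n → ℕ) :=
  Measure.pi fun _ => P.toMeasure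

/-- The probability mass of symbol `j` under `P`, as a real number. -/
def pReal (P : PMF ℕ) (j : ℕ) : ℝ := (P j).toReal

/-- Empirical frequency of the symbol `j` in the sample `ω`. -/
def freq {n : ℕ} (ω : Fin n → ℕ) (j : ℕ) : ℕ :=
  (Finset.univ.filter fun i => ω i = j).card

/-- The `r`-order missing mass `θ_r(P; X_n)`. -/
def missingMass (p : ℕ → ℝ) (r : ℕ) {n : ℕ} (ω : Fin n → ℕ) : ℝ :=
  ∑' j, p j ^ r * (if freq ω j = 0 then 1 else 0)

/-- `v_n(P) = Σ_j p_j^{2r} (1 - p_j)^n`. -/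
def vnP (P : PMF ℕ) (r n : ℕ) : ℝ :=
  ∑' j, pReal P j ^ (2 * r) * (1 - pReal P j) ^ n

/-!
Symbols that are simultaneously unseen are negatively dependent: a finite set `S` is missed with
probability `(1 - ∑ j ∈ S, p j) ^ n ≤ ∏ j ∈ S, (1 - p j) ^ n`. Hence the moment generating function
of a weighted sum of the events "`j` is unseen" is at most what it would be under independence, and
Bernstein's inequality holds with the largest weight as its scale.

The weights `p j ^ r` are first truncated to the symbols of mass at most `c`, which makes the scale
`c ^ r`. Some heavier symbol is unseen with probability at most `exp (-(n * c)) / c`, and `c₀` is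
what makes this at most `exp (-x)` for `c = 2 * max (c₀ / 2) (x + log n) / n`.
-/

open scoped Topology

section Inequalities

lemma one_sub_sum_le_prod_one_sub {ι R : Type*} [CommRing R] [LinearOrder R]
    [IsStrictOrderedRing R] {f : ι → R} (s : Finset ι) (hf0 : ∀ j ∈ s, 0 ≤ f j)
    (hf1 : ∀ j ∈ s, f j ≤ 1) : 1 - ∑ j ∈ s, f j ≤ ∏ j ∈ s, (1 - f j) := by
  induction s using Finset.cons_induction with
  | empty => simp
  | cons i s hi ih =>
    rw [Finset.forall_mem_cons] at hf0 hf1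
    rw [Finset.sum_cons, Finset.prod_cons]
    have hmul := mul_le_mul_of_nonneg_left (ih hf0.2 hf1.2) (sub_nonneg.2 hf1.1)
    have hcross := mul_nonneg hf0.1 (Finset.sum_nonneg hf0.2)
    linarith

lemma exp_sub_one_sub_le {y : ℝ} (hy0 : 0 ≤ y) (hy3 : y < 3) :
    exp y - 1 - y ≤ y ^ 2 / (2 * (1 - y / 3)) := by
  have hexp : HasSum (fun k : ℕ => y ^ (k + 2) / (k + 2).factorial) (exp y - 1 - y) := by
    have h := NormedSpace.expSeries_div_hasSum_exp y
    rw [← Real.exp_eq_exp_ℝ] at h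
    simpa [Finset.sum_range_succ, sub_sub] using (hasSum_nat_add_iff' 2).2 h
  have hgeom : HasSum (fun k : ℕ => y ^ 2 / 2 * (y / 3) ^ k) (y ^ 2 / (2 * (1 - y / 3))) := by
    rw [div_mul_eq_div_div, div_eq_mul_inv (y ^ 2 / 2)]
    exact (hasSum_geometric_of_lt_one (by positivity) (by linarith)).mul_left _
  refine hasSum_le (fun k => ?_) hexp hgeom
  have hfact : (2 * 3 ^ k : ℝ) ≤ (k + 2).factorial := by
    rw [add_comm k 2]
    exact_mod_cast Nat.factorial_mul_pow_le_factorial (m := 2) (n := k)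
  calc y ^ (k + 2) / (k + 2).factorial ≤ y ^ (k + 2) / (2 * 3 ^ k) := by gcongr
    _ = y ^ 2 / 2 * (y / 3) ^ k := by rw [div_pow]; ring

lemma exp_mul_sub_one_le {M t w : ℝ} (hw : 0 ≤ w) (hwM : w ≤ M) (ht : 0 ≤ t) (htM : M / 3 * t < 1) :
    exp (t * w) - 1 ≤ t * w + t ^ 2 * w ^ 2 / (2 * (1 - M / 3 * t)) := by
  have hle : t * w / 3 ≤ M / 3 * t := by linarith [mul_le_mul_of_nonneg_left hwM ht]
  have hexp := exp_sub_one_sub_le (mul_nonneg ht hw) (by linarith)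
  have hden : (t * w) ^ 2 / (2 * (1 - t * w / 3)) ≤ t ^ 2 * w ^ 2 / (2 * (1 - M / 3 * t)) := by
    rw [mul_pow]
    gcongr
  linarith

lemma neg_half_le_log_of_le {c₀ y : ℝ} (hc₀ : 0 < c₀) (hlog : log c₀ / c₀ = -(1 / 2))
    (hy : c₀ ≤ y) : -(y / 2) ≤ log y := by
  have hlog' : log c₀ = -(1 / 2) * c₀ := (div_eq_iff hc₀.ne').1 hlog
  linarith [log_le_log hc₀ hy]

lemma exp_neg_mul_div_le_exp_neg {n c x : ℝ} (hn : 0 < n) (hc : 0 < c)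
    (hx : 2 * (x + log n) ≤ n * c) (hlog : -(n * c / 2) ≤ log (n * c)) :
    exp (-(n * c)) / c ≤ exp (-x) := by
  rw [div_le_iff₀ hc, ← exp_log hc, ← exp_add, exp_le_exp, exp_log hc]
  rw [log_mul hn.ne' hc.ne'] at hlog
  linarith

end Inequalities

section SubGamma

variable {Ω : Type*} [MeasurableSpace Ω] {μ : Measure Ω} [IsFiniteMeasure μ] {X : Ω → ℝ}
  {m v c x : ℝ}

lemma measureReal_ge_le_exp_neg_of_mgf_le (hv : 0 ≤ v) (hc : 0 < c) (hx : 0 < x)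
    (hint : ∀ t, 0 ≤ t → c * t < 1 → Integrable (fun ω => exp (t * X ω)) μ)
    (hmgf : ∀ t, 0 ≤ t → c * t < 1 →
      mgf X μ t ≤ exp (t * m + t ^ 2 * v / (2 * (1 - c * t)))) :
    μ.real {ω | m + √(2 * v * x) + c * x ≤ X ω} ≤ exp (-x) := by
  have chernoff : ∀ t, 0 ≤ t → c * t < 1 → μ.real {ω | m + √(2 * v * x) + c * x ≤ X ω} ≤
      exp (t ^ 2 * v / (2 * (1 - c * t)) - t * (√(2 * v * x) + c * x)) := by
    intro t ht hct
    refine (measure_ge_le_exp_mul_mgf _ ht (hint t ht hct)).trans ?_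
    grw [hmgf t ht hct]
    rw [← exp_add]
    exact (congrArg exp (by ring)).le
  rcases hv.eq_or_lt with rfl | hv
  · -- The optimal parameter `c⁻¹` is excluded by `c * t < 1`, so it is approached from the left.
    have hlim : Tendsto (fun t => exp (-(t * (c * x)))) (𝓝[<] c⁻¹) (𝓝 (exp (-x))) := by
      have hcont : Continuous fun t => exp (-(t * (c * x))) := by fun_prop
      simpa [inv_mul_cancel_left₀ hc.ne'] using hcont.continuousWithinAt (x := c⁻¹).tendsto
    refine ge_of_tendsto hlim ?_
    filter_upwards [Ioo_mem_nhdsLT (inv_pos.2 hc)] with t ht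
    simpa using chernoff t ht.1.le ((lt_inv_mul_iff₀ hc).1 (by simpa using ht.2))
  · obtain ⟨s, hs, rfl⟩ : ∃ s, 0 < s ∧ 2 * x * s ^ 2 = v :=
      ⟨√(v / (2 * x)), by positivity, by rw [sq_sqrt (by positivity)]; field_simp⟩
    have hsqrt : √(2 * (2 * x * s ^ 2) * x) = 2 * x * s := by
      rw [show 2 * (2 * x * s ^ 2) * x = (2 * x * s) ^ 2 by ring, sqrt_sq (by positivity)]
    have hgap : 1 - c * (c + s)⁻¹ = s * (c + s)⁻¹ := by field_simp; ring
    have hgap_pos : 0 < s * (c + s)⁻¹ := by positivity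
    refine (chernoff (c + s)⁻¹ (by positivity) (by linarith)).trans_eq ?_
    rw [hsqrt, hgap]
    congr 1
    field_simp
    ring

end SubGamma

/-- Negative dependence of a family of events: any finitely many of them occur together with at
most the probability they would have under independence. For indicators this is negative upper
orthant dependence. -/
def NegativelyDependent {ι Ω : Type*} [MeasurableSpace Ω] (A : ι → Set Ω) (μ : Measure Ω) : Prop :=
  ∀ S : Finset ι, μ.real (⋂ j ∈ S, A j) ≤ ∏ j ∈ S, μ.real (A j)

/-- The total weight `∑ j, a j * 1_{A j}` of the events `A j` that occur. It is `0` by convention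
where the series diverges. -/
def weightedCount {ι Ω : Type*} (a : ι → ℝ) (A : ι → Set Ω) (ω : Ω) : ℝ :=
  ∑' j, a j * (A j).indicator 1 ω

section WeightedCount

variable {ι Ω : Type*} {a : ι → ℝ} {A : ι → Set Ω}

lemma mul_indicator_one_le {w : ℝ} (hw : 0 ≤ w) (B : Set Ω) (ω : Ω) :
    w * B.indicator 1 ω ≤ w :=
  mul_le_of_le_one_right hw (Set.indicator_le_self' (fun _ _ => zero_le_one) ω)

lemma mul_indicator_one_nonneg {w : ℝ} (hw : 0 ≤ w) (B : Set Ω) (ω : Ω) :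
    0 ≤ w * B.indicator 1 ω :=
  mul_nonneg hw (Set.indicator_nonneg (fun _ _ => zero_le_one) ω)

lemma hasSum_weightedCount (ha : ∀ j, 0 ≤ a j) (hsum : Summable a) (ω : Ω) :
    HasSum (fun j => a j * (A j).indicator 1 ω) (weightedCount a A ω) :=
  (hsum.of_nonneg_of_le (fun j => mul_indicator_one_nonneg (ha j) _ ω)
    fun j => mul_indicator_one_le (ha j) _ ω).hasSum

lemma weightedCount_le_tsum (ha : ∀ j, 0 ≤ a j) (hsum : Summable a) (ω : Ω) :
    weightedCount a A ω ≤ ∑' j, a j :=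
  hasSum_le (fun j => mul_indicator_one_le (ha j) _ ω) (hasSum_weightedCount ha hsum ω)
    hsum.hasSum

lemma exp_mul_sum_indicator_one (t : ℝ) (S : Finset ι) (ω : Ω) :
    exp (t * ∑ j ∈ S, a j * (A j).indicator 1 ω) =
      ∏ j ∈ S, (1 + (exp (t * a j) - 1) * (A j).indicator 1 ω) := by
  rw [Finset.mul_sum, exp_sum]
  refine Finset.prod_congr rfl fun j _ => ?_
  by_cases hω : ω ∈ A j <;> simp [hω]

end WeightedCount

section NegativelyDependent

variable {ι Ω : Type*} [MeasurableSpace Ω] {μ : Measure Ω} {a : ι → ℝ}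
  {A : ι → Set Ω} {M t x : ℝ}

lemma integral_prod_indicator_one {S : Finset ι} (hA : ∀ j, MeasurableSet (A j)) :
    ∫ ω, ∏ j ∈ S, (A j).indicator (1 : Ω → ℝ) ω ∂μ = μ.real (⋂ j ∈ S, A j) := by
  simp only [prod_indicator_const_apply, one_pow]
  exact integral_indicator_one (S.measurableSet_biInter fun j _ => hA j)

variable [IsFiniteMeasure μ]

lemma integrable_indicator_one {B : Set Ω} (hB : MeasurableSet B) :
    Integrable (B.indicator (1 : Ω → ℝ)) μ :=
  (integrable_const 1).indicator hB

lemma summable_mul_measureReal (ha : ∀ j, 0 ≤ a j) (hsum : Summable a) :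
    Summable fun j => a j * μ.real (A j) :=
  (hsum.mul_right (μ.real Set.univ)).of_nonneg_of_le
    (fun j => mul_nonneg (ha j) measureReal_nonneg)
    fun j => mul_le_mul_of_nonneg_left (measureReal_mono (Set.subset_univ _)) (ha j)

lemma summable_sq_mul_measureReal (ha : ∀ j, 0 ≤ a j) (haM : ∀ j, a j ≤ M) (hsum : Summable a) :
    Summable fun j => a j ^ 2 * μ.real (A j) := by
  refine summable_mul_measureReal (fun j => sq_nonneg (a j)) ?_
  refine (hsum.mul_left M).of_nonneg_of_le (fun j => sq_nonneg (a j)) fun j => ?_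
  rw [sq]
  exact mul_le_mul_of_nonneg_right (haM j) (ha j)

lemma NegativelyDependent.integral_prod_one_add_le (h : NegativelyDependent A μ)
    (hA : ∀ j, MeasurableSet (A j)) (ha : ∀ j, 0 ≤ a j) (S : Finset ι) :
    ∫ ω, ∏ j ∈ S, (1 + a j * (A j).indicator 1 ω) ∂μ ≤ ∏ j ∈ S, (1 + a j * μ.real (A j)) := by
  have hint (T : Finset ι) : Integrable (fun ω => ∏ j ∈ T, (A j).indicator (1 : Ω → ℝ) ω) μ := by
    simp only [prod_indicator_const_apply, one_pow]
    exact integrable_indicator_one (T.measurableSet_biInter fun j _ => hA j)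
  simp only [Finset.prod_one_add, Finset.prod_mul_distrib]
  rw [integral_finsetSum _ fun T _ => (hint T).const_mul _]
  refine Finset.sum_le_sum fun T _ => ?_
  rw [integral_const_mul, integral_prod_indicator_one hA]
  exact mul_le_mul_of_nonneg_left (h T) (Finset.prod_nonneg fun j _ => ha j)

lemma NegativelyDependent.mgf_sum_indicator_le (h : NegativelyDependent A μ)
    (hA : ∀ j, MeasurableSet (A j)) (ha : ∀ j, 0 ≤ a j) (haM : ∀ j, a j ≤ M) (ht : 0 ≤ t)
    (htM : M / 3 * t < 1) (S : Finset ι) :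
    mgf (fun ω => ∑ j ∈ S, a j * (A j).indicator 1 ω) μ t ≤
      exp (t * ∑ j ∈ S, a j * μ.real (A j) +
        t ^ 2 * (∑ j ∈ S, a j ^ 2 * μ.real (A j)) / (2 * (1 - M / 3 * t))) := by
  have hexp (j : ι) : 0 ≤ exp (t * a j) - 1 := sub_nonneg.2 (one_le_exp (mul_nonneg ht (ha j)))
  calc mgf (fun ω => ∑ j ∈ S, a j * (A j).indicator 1 ω) μ t
      = ∫ ω, ∏ j ∈ S, (1 + (exp (t * a j) - 1) * (A j).indicator 1 ω) ∂μ :=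
        integral_congr_ae (Eventually.of_forall (exp_mul_sum_indicator_one t S))
    _ ≤ ∏ j ∈ S, (1 + (exp (t * a j) - 1) * μ.real (A j)) := h.integral_prod_one_add_le hA hexp S
    _ ≤ exp (∑ j ∈ S, (exp (t * a j) - 1) * μ.real (A j)) :=
        prod_one_add_le_exp_sum S fun j => mul_nonneg (hexp j) measureReal_nonneg
    _ ≤ exp (∑ j ∈ S, (t * a j + t ^ 2 * a j ^ 2 / (2 * (1 - M / 3 * t))) * μ.real (A j)) := by
        gcongr with j
        exact exp_mul_sub_one_le (ha j) (haM j) ht htM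
    _ = exp (t * ∑ j ∈ S, a j * μ.real (A j) +
          t ^ 2 * (∑ j ∈ S, a j ^ 2 * μ.real (A j)) / (2 * (1 - M / 3 * t))) := by
        simp only [Finset.mul_sum, Finset.sum_div, ← Finset.sum_add_distrib]
        exact congrArg exp (Finset.sum_congr rfl fun j _ => by ring)

variable [Countable ι]

lemma integral_weightedCount (hA : ∀ j, MeasurableSet (A j)) (ha : ∀ j, 0 ≤ a j)
    (hsum : Summable a) : ∫ ω, weightedCount a A ω ∂μ = ∑' j, a j * μ.real (A j) := by
  have hint (j : ι) : ∫ ω, a j * (A j).indicator (1 : Ω → ℝ) ω ∂μ = a j * μ.real (A j) := by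
    rw [integral_const_mul, integral_indicator_one (hA j)]
  have hnorm : Summable fun j => ∫ ω, ‖a j * (A j).indicator (1 : Ω → ℝ) ω‖ ∂μ := by
    simpa only [norm_of_nonneg (mul_indicator_one_nonneg (ha _) _ _), hint] using
      summable_mul_measureReal ha hsum
  simpa only [hint, weightedCount] using (integral_tsum_of_summable_integral_norm
    (fun j => (integrable_indicator_one (hA j)).const_mul (a j)) hnorm).symm

lemma integrable_exp_mul_weightedCount (hA : ∀ j, MeasurableSet (A j)) (ha : ∀ j, 0 ≤ a j)
    (hsum : Summable a) (ht : 0 ≤ t) : Integrable (fun ω => exp (t * weightedCount a A ω)) μ := by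
  have hmeas : Measurable (weightedCount a A) :=
    Measurable.tsum fun j => (measurable_one.indicator (hA j)).const_mul (a j)
  refine Integrable.of_bound (hmeas.const_mul t).exp.aestronglyMeasurable (exp (t * ∑' j, a j))
    (Eventually.of_forall fun ω => ?_)
  rw [norm_of_nonneg (exp_nonneg _)]
  grw [weightedCount_le_tsum ha hsum ω]

lemma tendsto_mgf_sum_indicator (hA : ∀ j, MeasurableSet (A j)) (ha : ∀ j, 0 ≤ a j)
    (hsum : Summable a) (ht : 0 ≤ t) :
    Tendsto (fun S : Finset ι => mgf (fun ω => ∑ j ∈ S, a j * (A j).indicator 1 ω) μ t) atTop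
      (𝓝 (mgf (weightedCount a A) μ t)) := by
  refine tendsto_integral_filter_of_dominated_convergence (fun ω => exp (t * weightedCount a A ω))
    (Eventually.of_forall fun S => ?_)
    (Eventually.of_forall fun S => Eventually.of_forall fun ω => ?_)
    (integrable_exp_mul_weightedCount hA ha hsum ht) (Eventually.of_forall fun ω => ?_)
  · have hmeas : Measurable fun ω => ∑ j ∈ S, a j * (A j).indicator (1 : Ω → ℝ) ω :=
      S.measurable_fun_sum fun j _ => (measurable_one.indicator (hA j)).const_mul (a j)
    exact (hmeas.const_mul t).exp.aestronglyMeasurable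
  · rw [norm_of_nonneg (exp_nonneg _)]
    exact exp_le_exp.2 <| mul_le_mul_of_nonneg_left (sum_le_hasSum S
      (fun j _ => mul_indicator_one_nonneg (ha j) _ ω) (hasSum_weightedCount ha hsum ω)) ht
  · exact ((hasSum_weightedCount ha hsum ω).const_mul t).rexp

lemma NegativelyDependent.mgf_weightedCount_le (h : NegativelyDependent A μ)
    (hA : ∀ j, MeasurableSet (A j)) (ha : ∀ j, 0 ≤ a j) (haM : ∀ j, a j ≤ M)
    (hsum : Summable a) (ht : 0 ≤ t) (htM : M / 3 * t < 1) :
    mgf (weightedCount a A) μ t ≤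
      exp (t * ∑' j, a j * μ.real (A j) +
        t ^ 2 * (∑' j, a j ^ 2 * μ.real (A j)) / (2 * (1 - M / 3 * t))) := by
  have hmean := (summable_mul_measureReal (μ := μ) (A := A) ha hsum).hasSum
  have hvar := (summable_sq_mul_measureReal (μ := μ) (A := A) ha haM hsum).hasSum
  exact le_of_tendsto_of_tendsto' (tendsto_mgf_sum_indicator hA ha hsum ht)
    ((hmean.const_mul t).add ((hvar.const_mul (t ^ 2)).div_const _)).rexp
    (h.mgf_sum_indicator_le hA ha haM ht htM)

theorem NegativelyDependent.measureReal_weightedCount_ge_le (h : NegativelyDependent A μ)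
    (hA : ∀ j, MeasurableSet (A j)) (ha : ∀ j, 0 ≤ a j) (haM : ∀ j, a j ≤ M) (hM : 0 < M)
    (hsum : Summable a) (hx : 0 < x) :
    μ.real {ω | ∫ ω', weightedCount a A ω' ∂μ + √(2 * (∑' j, a j ^ 2 * μ.real (A j)) * x) +
      M / 3 * x ≤ weightedCount a A ω} ≤ exp (-x) := by
  rw [integral_weightedCount hA ha hsum]
  exact measureReal_ge_le_exp_neg_of_mgf_le
    (tsum_nonneg fun j => mul_nonneg (sq_nonneg _) measureReal_nonneg) (by positivity) hx
    (fun t ht _ => integrable_exp_mul_weightedCount hA ha hsum ht)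
    fun t ht htM => h.mgf_weightedCount_le hA ha haM hsum ht htM

end NegativelyDependent

section PReal

variable (P : PMF ℕ)

lemma pReal_nonneg (j : ℕ) : 0 ≤ pReal P j := ENNReal.toReal_nonneg

lemma hasSum_pReal : HasSum (pReal P) 1 := by
  have h := ENNReal.hasSum_toReal P.tsum_coe_ne_top
  rwa [← ENNReal.tsum_toReal_eq P.apply_ne_top, P.tsum_coe, ENNReal.toReal_one] at h

lemma sum_pReal_le_one (S : Finset ℕ) : ∑ j ∈ S, pReal P j ≤ 1 :=
  sum_le_hasSum S (fun j _ => pReal_nonneg P j) (hasSum_pReal P)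

lemma pReal_le_one (j : ℕ) : pReal P j ≤ 1 :=
  ENNReal.toReal_le_of_le_ofReal zero_le_one (by simpa using P.coe_le_one j)

lemma summable_pReal_pow {r : ℕ} (hr : 1 ≤ r) : Summable fun j => pReal P j ^ r :=
  (hasSum_pReal P).summable.of_nonneg_of_le (fun j => pow_nonneg (pReal_nonneg P j) r)
    fun j => pow_le_of_le_one (pReal_nonneg P j) (pReal_le_one P j) (by omega)

lemma toMeasure_real_finset (S : Finset ℕ) : P.toMeasure.real S = ∑ j ∈ S, pReal P j := by
  rw [Measure.real, P.toMeasure_apply_finset, ENNReal.toReal_sum fun j _ => P.apply_ne_top j]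
  rfl

end PReal

instance isProbabilityMeasure_sampleMeasure (P : PMF ℕ) (n : ℕ) :
    IsProbabilityMeasure (sampleMeasure P n) :=
  inferInstanceAs (IsProbabilityMeasure (Measure.pi _))

/-- The event that the symbol `j` does not occur in a sample of size `n`. -/
def unseen (n j : ℕ) : Set (Fin n → ℕ) := {ω | freq ω j = 0}

section Unseen

variable {n j : ℕ}

lemma mem_unseen {ω : Fin n → ℕ} : ω ∈ unseen n j ↔ ∀ i, ω i ≠ j := by
  simp [unseen, freq, Finset.filter_eq_empty_iff]

lemma biInter_unseen (S : Finset ℕ) :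
    ⋂ j ∈ S, unseen n j = Set.univ.pi fun _ => (S : Set ℕ)ᶜ := by
  ext ω
  simp only [Set.mem_iInter, mem_unseen, Set.mem_univ_pi, Set.mem_compl_iff, Finset.mem_coe]
  exact ⟨fun h i hi => h _ hi i rfl, fun h j hj i hij => h i (hij ▸ hj)⟩

lemma sampleMeasure_real_biInter_unseen (P : PMF ℕ) (S : Finset ℕ) :
    (sampleMeasure P n).real (⋂ j ∈ S, unseen n j) = (1 - ∑ j ∈ S, pReal P j) ^ n := by
  rw [biInter_unseen, sampleMeasure, Measure.real, Measure.pi_pi, Finset.prod_const,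
    ENNReal.toReal_pow, Finset.card_fin, ← measureReal_def,
    probReal_compl_eq_one_sub S.measurableSet, toMeasure_real_finset]

lemma sampleMeasure_real_unseen (P : PMF ℕ) :
    (sampleMeasure P n).real (unseen n j) = (1 - pReal P j) ^ n := by
  simpa using sampleMeasure_real_biInter_unseen (n := n) P {j}

lemma negativelyDependent_unseen (P : PMF ℕ) :
    NegativelyDependent (unseen n) (sampleMeasure P n) := by
  intro S
  simp only [sampleMeasure_real_biInter_unseen, sampleMeasure_real_unseen, Finset.prod_pow]
  exact pow_le_pow_left₀ (sub_nonneg.2 (sum_pReal_le_one P S))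
    (one_sub_sum_le_prod_one_sub S (fun j _ => pReal_nonneg P j) fun j _ => pReal_le_one P j) n

lemma sampleMeasure_real_unseen_le_of_lt (P : PMF ℕ) {c : ℝ} (hc : 0 < c) (hj : c < pReal P j) :
    (sampleMeasure P n).real (unseen n j) ≤ pReal P j * (exp (-(n * c)) / c) := by
  have hbase : 1 - pReal P j ≤ exp (-c) := by linarith [add_one_le_exp (-c)]
  calc (sampleMeasure P n).real (unseen n j) = (1 - pReal P j) ^ n := sampleMeasure_real_unseen P
    _ ≤ exp (-c) ^ n := pow_le_pow_left₀ (sub_nonneg.2 (pReal_le_one P j)) hbase n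
    _ = exp (-(n * c)) := by rw [← exp_nat_mul, mul_neg]
    _ ≤ pReal P j / c * exp (-(n * c)) :=
        le_mul_of_one_le_left (exp_nonneg _) ((one_le_div hc).2 hj.le)
    _ = pReal P j * (exp (-(n * c)) / c) := by ring

lemma sampleMeasure_real_iUnion_unseen_le (P : PMF ℕ) {c : ℝ} (hc : 0 < c) :
    (sampleMeasure P n).real (⋃ j ∈ {j | c < pReal P j}, unseen n j) ≤ exp (-(n * c)) / c := by
  have hfin : {j | c < pReal P j}.Finite := by
    have h := (hasSum_pReal P).summable.tendsto_cofinite_zero.eventually (gt_mem_nhds hc)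
    refine (eventually_cofinite.1 h).subset fun j hj => ?_
    exact not_lt.2 (le_of_lt hj)
  calc (sampleMeasure P n).real (⋃ j ∈ {j | c < pReal P j}, unseen n j)
      = (sampleMeasure P n).real (⋃ j ∈ hfin.toFinset, unseen n j) := by
        simp only [hfin.mem_toFinset]
    _ ≤ ∑ j ∈ hfin.toFinset, (sampleMeasure P n).real (unseen n j) :=
        measureReal_biUnion_finset_le _ _
    _ ≤ ∑ j ∈ hfin.toFinset, pReal P j * (exp (-(n * c)) / c) :=
        Finset.sum_le_sum fun j hj =>
          sampleMeasure_real_unseen_le_of_lt P hc (hfin.mem_toFinset.1 hj)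
    _ ≤ exp (-(n * c)) / c := by
        rw [← Finset.sum_mul]
        exact mul_le_of_le_one_left (by positivity) (sum_pReal_le_one P _)

end Unseen

/-- The weights of the `r`-order missing mass, truncated to the symbols of mass at most `c`. -/
def truncatedWeight (P : PMF ℕ) (r : ℕ) (c : ℝ) : ℕ → ℝ :=
  {j | pReal P j ≤ c}.indicator fun j => pReal P j ^ r

section TruncatedWeight

variable (P : PMF ℕ) {r : ℕ} {c : ℝ} (j : ℕ)

lemma truncatedWeight_nonneg : 0 ≤ truncatedWeight P r c j :=
  Set.indicator_nonneg (fun j _ => pow_nonneg (pReal_nonneg P j) r) j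

lemma truncatedWeight_le_pReal_pow : truncatedWeight P r c j ≤ pReal P j ^ r :=
  Set.indicator_le_self' (fun j _ => pow_nonneg (pReal_nonneg P j) r) j

lemma truncatedWeight_le_pow (hc : 0 ≤ c) : truncatedWeight P r c j ≤ c ^ r :=
  Set.indicator_apply_le' (fun hj => pow_le_pow_left₀ (pReal_nonneg P j) hj r)
    fun _ => pow_nonneg hc r

lemma summable_truncatedWeight (hr : 1 ≤ r) : Summable (truncatedWeight P r c) :=
  (summable_pReal_pow P hr).indicator _

end TruncatedWeight

section MissingMass

variable (P : PMF ℕ) {r n : ℕ} {c x : ℝ}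

lemma missingMass_eq_weightedCount (p : ℕ → ℝ) (ω : Fin n → ℕ) :
    missingMass p r ω = weightedCount (fun j => p j ^ r) (unseen n) ω := by
  simp [missingMass, weightedCount, unseen, Set.indicator_apply]

lemma weightedCount_truncatedWeight_eq_missingMass {ω : Fin n → ℕ}
    (hω : ω ∉ ⋃ j ∈ {j | c < pReal P j}, unseen n j) :
    weightedCount (truncatedWeight P r c) (unseen n) ω = missingMass (pReal P) r ω := by
  rw [missingMass_eq_weightedCount]
  refine tsum_congr fun j => ?_
  by_cases hj : pReal P j ≤ c
  · simp [truncatedWeight, hj]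
  · have hseen : ω ∉ unseen n j := fun h => hω (Set.mem_biUnion (not_le.1 hj) h)
    simp [hseen]

lemma integral_weightedCount_truncatedWeight_le (hr : 1 ≤ r) :
    ∫ ω, weightedCount (truncatedWeight P r c) (unseen n) ω ∂sampleMeasure P n ≤
      ∫ ω, missingMass (pReal P) r ω ∂sampleMeasure P n := by
  have hpow (j : ℕ) : 0 ≤ pReal P j ^ r := pow_nonneg (pReal_nonneg P j) r
  simp only [missingMass_eq_weightedCount]
  rw [integral_weightedCount (fun _ => .of_discrete) (truncatedWeight_nonneg P)
      (summable_truncatedWeight P hr),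
    integral_weightedCount (fun _ => .of_discrete) hpow (summable_pReal_pow P hr)]
  exact (summable_mul_measureReal (truncatedWeight_nonneg P)
      (summable_truncatedWeight P hr)).tsum_le_tsum
    (fun j => mul_le_mul_of_nonneg_right (truncatedWeight_le_pReal_pow P j) measureReal_nonneg)
    (summable_mul_measureReal hpow (summable_pReal_pow P hr))

lemma tsum_truncatedWeight_sq_mul_le_vnP (hr : 1 ≤ r) (hc : 0 ≤ c) :
    ∑' j, truncatedWeight P r c j ^ 2 * (sampleMeasure P n).real (unseen n j) ≤ vnP P r n := by
  have hvnP : vnP P r n = ∑' j, pReal P j ^ (2 * r) * (sampleMeasure P n).real (unseen n j) := by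
    simp only [vnP, sampleMeasure_real_unseen]
  rw [hvnP]
  refine (summable_sq_mul_measureReal (truncatedWeight_nonneg P)
    (fun j => truncatedWeight_le_pow P j hc) (summable_truncatedWeight P hr)).tsum_le_tsum
    (fun j => ?_) (summable_mul_measureReal (fun j => pow_nonneg (pReal_nonneg P j) _)
      (summable_pReal_pow P (by omega)))
  rw [mul_comm 2 r, pow_mul]
  gcongr
  exacts [truncatedWeight_nonneg P j, truncatedWeight_le_pReal_pow P j]

lemma sampleMeasure_real_weightedCount_truncatedWeight_ge_le (hr : 1 ≤ r) (hc : 0 < c)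
    (hx : 0 < x) :
    (sampleMeasure P n).real {ω | ∫ ω', missingMass (pReal P) r ω' ∂sampleMeasure P n +
      √(2 * vnP P r n * x) + c ^ r / 3 * x ≤ weightedCount (truncatedWeight P r c) (unseen n) ω} ≤
      exp (-x) := by
  refine le_trans (measureReal_mono ?_) <|
    (negativelyDependent_unseen P).measureReal_weightedCount_ge_le (fun _ => .of_discrete)
      (truncatedWeight_nonneg P) (fun j => truncatedWeight_le_pow P j hc.le) (pow_pos hc r)
      (summable_truncatedWeight P hr) hx
  refine Set.ofPred_subset_ofPred_of_imp fun ω hω => le_trans ?_ hω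
  grw [integral_weightedCount_truncatedWeight_le P hr,
    tsum_truncatedWeight_sq_mul_le_vnP P hr hc.le]

theorem sampleMeasure_real_missingMass_ge_le (hr : 1 ≤ r) (hc : 0 < c) (hx : 0 < x) :
    (sampleMeasure P n).real {ω | ∫ ω', missingMass (pReal P) r ω' ∂sampleMeasure P n +
      √(2 * vnP P r n * x) + c ^ r / 3 * x ≤ missingMass (pReal P) r ω} ≤
      exp (-x) + exp (-(n * c)) / c := by
  refine (measureReal_mono fun ω hω => ?_).trans <| (measureReal_union_le _ _).trans <|
    add_le_add (sampleMeasure_real_weightedCount_truncatedWeight_ge_le P hr hc hx)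
      (sampleMeasure_real_iUnion_unseen_le P hc)
  by_cases hheavy : ω ∈ ⋃ j ∈ {j | c < pReal P j}, unseen n j
  · exact Or.inr hheavy
  · exact Or.inl (hω.trans_eq (weightedCount_truncatedWeight_eq_missingMass P hheavy).symm)

end MissingMass

/-- Right-tail concentration inequality for the `r`-order missing mass, where `c₀` is the
unique positive solution of `log x / x = -1/2`. -/
theorem missingMass_right_tail (P : PMF ℕ) (r n : ℕ) (hr : 1 ≤ r) (hn : 1 ≤ n)
    (c₀ : ℝ) (hc₀ : 0 < c₀) (hc₀' : Real.log c₀ / c₀ = -(1/2))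
    (x : ℝ) (hx : 0 < x) :
    sampleMeasure P n
      {ω | missingMass (pReal P) r ω -
            (∫ ω', missingMass (pReal P) r ω' ∂ sampleMeasure P n)
          ≥ Real.sqrt (2 * vnP P r n * x)
            + (2 * max (c₀ / 2) (x + Real.log n) / n) ^ r * (2 * x / 3)}
      ≤ ENNReal.ofReal (2 * Real.exp (-x)) := by
  set c := 2 * max (c₀ / 2) (x + log n) / n
  have hn_pos : (0 : ℝ) < n := by exact_mod_cast hn
  have hnc : n * c = 2 * max (c₀ / 2) (x + log n) := mul_div_cancel₀ _ hn_pos.ne'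
  have hnc₀ : c₀ ≤ n * c := by linarith [le_max_left (c₀ / 2) (x + log n)]
  have hncx : 2 * (x + log n) ≤ n * c := by linarith [le_max_right (c₀ / 2) (x + log n)]
  have hc : 0 < c := pos_of_mul_pos_right (hc₀.trans_le hnc₀) hn_pos.le
  have hheavy : exp (-(n * c)) / c ≤ exp (-x) :=
    exp_neg_mul_div_le_exp_neg hn_pos hc hncx (neg_half_le_log_of_le hc₀ hc₀' hnc₀)
  rw [← ofReal_measureReal]
  refine ENNReal.ofReal_le_ofReal ?_
  calc _ ≤ exp (-x) + exp (-(n * c)) / c := by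
        refine (measureReal_mono fun ω hω => ?_).trans
          (sampleMeasure_real_missingMass_ge_le P hr hc hx)
        rw [Set.mem_ofPred_eq] at hω ⊢
        linarith [mul_pos (pow_pos hc r) hx]
    _ ≤ 2 * exp (-x) := by linarith

end
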